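/- Let L be an infeasible linear pencil in n variables. Then −1 ∈ M_L^(2ⁿ−1), i.e., there exist polynomials pᵢ ∈ ℝ[X₁,…,Xₙ] of degree at most 2ⁿ−1 and vectors of polynomials vⱼ ∈ ℝ[X₁,…,Xₙ]ᵐ with all entries of degree at most 2ⁿ−1 such that −1 = Σᵢ pᵢ² + Σⱼ vⱼᵀ L vⱼ. -/

import Mathlib

open MvPolynomial Matrix

/-- The linear pencil `L = A 0 + X 1 * A 1 + ... + X n * A n` as a symmetric matrix
with entries in the polynomial ring `ℝ[X 1, ..., X n]`. -/
noncomputable def pencilPoly {n m : ℕ} (A : Fin (n+1) → Matrix (Fin m) (Fin m) ℝ) :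
    Matrix (Fin m) (Fin m) (MvPolynomial (Fin n) ℝ) :=
  fun a b => MvPolynomial.C (A 0 a b) + ∑ i : Fin n, MvPolynomial.X i * MvPolynomial.C (A i.succ a b)

/-- Evaluation of the pencil at a point `x ∈ ℝⁿ`. -/
def pencilEval {n m : ℕ} (A : Fin (n+1) → Matrix (Fin m) (Fin m) ℝ) (x : Fin n → ℝ) :
    Matrix (Fin m) (Fin m) ℝ :=
  A 0 + ∑ i : Fin n, x i • A i.succ

/-- The spectrahedron `S_L = {x ∈ ℝⁿ ∣ L(x) ⪰ 0}`. -/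
def specSet {n m : ℕ} (A : Fin (n+1) → Matrix (Fin m) (Fin m) ℝ) : Set (Fin n → ℝ) :=
  {x | (pencilEval A x).PosSemidef}

/-- `vᵀ L v` for a vector `v` of polynomials. -/
noncomputable def vLv {n m : ℕ} (A : Fin (n+1) → Matrix (Fin m) (Fin m) ℝ)
    (v : Fin m → MvPolynomial (Fin n) ℝ) : MvPolynomial (Fin n) ℝ :=
  ∑ a : Fin m, ∑ b : Fin m, v a * pencilPoly A a b * v b

/-- Membership in the quadratic module `M_L` associated to the pencil `L`:
`p = s + Σⱼ vⱼᵀ L vⱼ` with `s` a sum of squares. -/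
def memQM {n m : ℕ} (A : Fin (n+1) → Matrix (Fin m) (Fin m) ℝ)
    (p : MvPolynomial (Fin n) ℝ) : Prop :=
  ∃ (k r : ℕ) (q : Fin k → MvPolynomial (Fin n) ℝ)
    (v : Fin r → Fin m → MvPolynomial (Fin n) ℝ),
    p = ∑ i, (q i)^2 + ∑ j, vLv A (v j)

/-- Membership in the truncated quadratic module `M_L^(k)` associated to `L`:
`p = Σᵢ pᵢ² + Σⱼ vⱼᵀ L vⱼ` where the `pᵢ` and all entries of the `vⱼ` have degree `≤ k`. -/
def memQMdeg {n m : ℕ} (A : Fin (n+1) → Matrix (Fin m) (Fin m) ℝ) (k : ℕ)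
    (p : MvPolynomial (Fin n) ℝ) : Prop :=
  ∃ (k₁ k₂ : ℕ) (q : Fin k₁ → MvPolynomial (Fin n) ℝ)
    (v : Fin k₂ → Fin m → MvPolynomial (Fin n) ℝ),
    (∀ i, (q i).totalDegree ≤ k) ∧ (∀ j a, (v j a).totalDegree ≤ k) ∧
    p = ∑ i, (q i)^2 + ∑ j, vLv A (v j)

/-!
The proof is by induction on the number of variables. A pencil `L` is infeasible exactly when no
linear functional on affine linear polynomials is positive at `1` and nonnegative at every `uᵀ L u`
with `u` a real vector. By compactness, the cone these polynomials generate then fails to be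
pointed, or some `u` with `L u ≠ 0` has `uᵀ L u = 0`. Either way there is a nonzero affine linear
polynomial `ℓ` with `-ℓ² ∈ M_L^(1)`. If `ℓ` is constant, then `-1 ∈ M_L^(1)`. Otherwise one variable
can be eliminated on the hyperplane `ℓ = 0`, and a certificate of degree `k` for the restricted
pencil lifts to `-1 + ℓ r ∈ M_L^(k)` with `deg r ≤ 2 k`. Finally
`-1 = 2 (-1 + ℓ r) + (1 - ℓ r)² + r² (-ℓ²)` lies in `M_L^(2 k + 1)`.
-/

section Convexity

variable {E : Type*} [AddCommGroup E] [Module ℝ E] {s : Set E}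

lemma convexHull_range_eq_image_stdSimplex {ι : Type*} [Fintype ι] (z : ι → E) :
    convexHull ℝ (Set.range z) = (fun w : ι → ℝ => ∑ i, w i • z i) '' stdSimplex ℝ ι := by
  classical
  have hz : z = Fintype.linearCombination ℝ z ∘ fun i => Pi.single i 1 := by
    ext i
    simp [Fintype.linearCombination_apply_single]
  rw [← convexHull_rangle_single_eq_stdSimplex]
  conv_lhs => rw [hz, Set.range_comp, ← LinearMap.image_convexHull]
  rfl

lemma exists_fin_mem_convexHull_range [FiniteDimensional ℝ E] {x : E} (hx : x ∈ convexHull ℝ s) :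
    ∃ z : Fin (Module.finrank ℝ E + 1) → E, (∀ i, z i ∈ s) ∧ x ∈ convexHull ℝ (Set.range z) := by
  rw [convexHull_eq_union] at hx
  simp only [Set.mem_iUnion] at hx
  obtain ⟨t, hts, hind, hxt⟩ := hx
  have hcard : Fintype.card t ≤ Fintype.card (Fin (Module.finrank ℝ E + 1)) := by
    rw [Fintype.card_fin]
    exact hind.card_le_finrank_succ.trans (Nat.succ_le_succ (Submodule.finrank_le _))
  obtain ⟨e⟩ := Function.Embedding.nonempty_of_card_le hcard
  have : Nonempty t := (convexHull_nonempty_iff.1 ⟨x, hxt⟩).to_subtype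
  refine ⟨Subtype.val ∘ Function.invFun e, fun i => hts (Function.invFun e i).2, ?_⟩
  rwa [(Function.invFun_surjective e.injective).range_comp, Subtype.range_coe]

lemma exists_neg_mem_hull_of_zero_mem_convexHull (h : (0 : E) ∈ convexHull ℝ s) :
    ∃ z ∈ s, -z ∈ PointedCone.hull ℝ s := by
  classical
  rw [_root_.convexHull_eq] at h
  obtain ⟨ι, t, w, z, hw, hw1, hz, hsum⟩ := h
  rw [Finset.centerMass_eq_of_sum_1 _ _ hw1] at hsum
  obtain ⟨i, hi, hwi⟩ := Finset.exists_ne_zero_of_sum_ne_zero (hw1 ▸ one_ne_zero)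
  have hneg : -z i = (w i)⁻¹ • ∑ j ∈ t.erase i, w j • z j := by
    rw [← Finset.add_sum_erase _ _ hi] at hsum
    rw [eq_neg_of_add_eq_zero_right hsum, smul_neg, smul_smul, inv_mul_cancel₀ hwi, one_smul]
  refine ⟨z i, hz i hi, hneg ▸ PointedCone.smul_mem _ (inv_nonneg.2 (hw i hi)) ?_⟩
  refine Submodule.sum_mem _ fun j hj => ?_
  have hjt := Finset.mem_of_mem_erase hj
  exact PointedCone.smul_mem _ (hw j hjt) (PointedCone.subset_hull (hz j hjt))

variable [TopologicalSpace E] [IsTopologicalAddGroup E] [ContinuousSMul ℝ E]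
  [FiniteDimensional ℝ E]

lemma isCompact_convexHull_of_isCompact (hs : IsCompact s) : IsCompact (convexHull ℝ s) := by
  let ι := Fin (Module.finrank ℝ E + 1)
  let combine : (ι → ℝ) × (ι → E) → E := fun p => ∑ i, p.1 i • p.2 i
  suffices h : convexHull ℝ s = combine '' (stdSimplex ℝ ι ×ˢ Set.univ.pi fun _ => s) by
    rw [h]
    exact ((isCompact_stdSimplex ℝ ι).prod (isCompact_univ_pi fun _ => hs)).image (by fun_prop)
  ext x
  constructor
  · intro hx
    obtain ⟨z, hz, hxz⟩ := exists_fin_mem_convexHull_range hx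
    rw [convexHull_range_eq_image_stdSimplex] at hxz
    obtain ⟨w, hw, rfl⟩ := hxz
    exact ⟨(w, z), ⟨hw, fun i _ => hz i⟩, rfl⟩
  · rintro ⟨⟨w, z⟩, ⟨hw, hz⟩, rfl⟩
    exact (convex_convexHull ℝ s).sum_mem (fun i _ => hw.1 i) hw.2
      fun i _ => subset_convexHull ℝ s (hz i trivial)

lemma exists_neg_mem_hull_or_exists_dual_pos [T2Space E] [LocallyConvexSpace ℝ E]
    (hs : IsCompact s) :
    (∃ z ∈ s, -z ∈ PointedCone.hull ℝ s) ∨ ∃ φ : StrongDual ℝ E, ∀ z ∈ s, 0 < φ z := by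
  by_cases h0 : (0 : E) ∈ convexHull ℝ s
  · exact .inl (exists_neg_mem_hull_of_zero_mem_convexHull h0)
  · obtain ⟨φ, c, hc, hφ⟩ := geometric_hahn_banach_point_closed (convex_convexHull ℝ s)
      (isCompact_convexHull_of_isCompact hs).isClosed h0
    rw [map_zero] at hc
    exact .inr ⟨φ, fun z hz => hc.trans (hφ z (subset_convexHull ℝ s hz))⟩

end Convexity

section AffinePolynomials

variable {n : ℕ}

/-- The affine linear polynomial `z 0 + z 1 * X 1 + ... + z n * X n` with coefficient vector `z`,
as a linear function of `z`. The variable `X i` has the coefficient `z i.succ`. -/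
noncomputable def affinePoly : (Fin (n + 1) → ℝ) →ₗ[ℝ] MvPolynomial (Fin n) ℝ where
  toFun z := C (z 0) + ∑ i : Fin n, X i * C (z i.succ)
  map_add' y z := by
    simp only [Pi.add_apply, C_add, mul_add, Finset.sum_add_distrib]
    ring
  map_smul' c z := by
    simp only [Pi.smul_apply, smul_eq_mul, C_mul, RingHom.id_apply, smul_eq_C_mul, mul_add,
      Finset.mul_sum, mul_left_comm]

lemma affinePoly_apply (z : Fin (n + 1) → ℝ) :
    affinePoly z = C (z 0) + ∑ i : Fin n, X i * C (z i.succ) := rfl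

lemma affinePoly_eq_C {z : Fin (n + 1) → ℝ} (hz : ∀ i : Fin n, z i.succ = 0) :
    affinePoly z = C (z 0) := by
  simp [affinePoly_apply, hz]

lemma totalDegree_affinePoly_le (z : Fin (n + 1) → ℝ) : (affinePoly z).totalDegree ≤ 1 := by
  rw [affinePoly_apply]
  refine (totalDegree_add _ _).trans (max_le (by simp) ?_)
  exact totalDegree_finsetSum_le fun i _ => (totalDegree_mul _ _).trans (by simp)

lemma rename_affinePoly_comp_succAbove {z : Fin (n + 2) → ℝ} {j : Fin (n + 1)}
    (hz : z j.succ = 0) :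
    rename j.succAbove (affinePoly (z ∘ j.succ.succAbove)) = affinePoly z := by
  simp only [affinePoly_apply, Function.comp_apply, Fin.sum_univ_succAbove _ j, hz, map_add,
    map_sum, map_mul, rename_X, rename_C, Fin.succ_succAbove_zero, Fin.succ_succAbove_succ,
    map_zero, mul_zero, zero_add]

end AffinePolynomials

section SymmetricMatrices

variable {ι R : Type*} [Fintype ι] [CommRing R] {M : Matrix ι ι R}

lemma dotProduct_mulVec_comm_of_isSymm (hM : M.IsSymm) (v w : ι → R) :
    v ⬝ᵥ M *ᵥ w = w ⬝ᵥ M *ᵥ v := by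
  rw [← dotProduct_transpose_mulVec, hM.eq]

lemma add_dotProduct_mulVec_add_of_isSymm (hM : M.IsSymm) (v w : ι → R) :
    (v + w) ⬝ᵥ M *ᵥ (v + w) = v ⬝ᵥ M *ᵥ v + 2 * (w ⬝ᵥ M *ᵥ v) + w ⬝ᵥ M *ᵥ w := by
  rw [mulVec_add, add_dotProduct, dotProduct_add, dotProduct_add,
    dotProduct_mulVec_comm_of_isSymm hM v w]
  ring

end SymmetricMatrices

section Pencils

variable {n m : ℕ} {A : Fin (n + 1) → Matrix (Fin m) (Fin m) ℝ}

lemma pencilPoly_apply (a b : Fin m) : pencilPoly A a b = affinePoly fun i => A i a b := rfl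

lemma totalDegree_pencilPoly_le (a b : Fin m) : (pencilPoly A a b).totalDegree ≤ 1 :=
  totalDegree_affinePoly_le fun i => A i a b

lemma pencilPoly_isSymm (hsymm : ∀ i, (A i).IsSymm) : (pencilPoly A).IsSymm := by
  ext a b
  simp only [transpose_apply, pencilPoly_apply, (hsymm _).apply]

lemma pencilPoly_mulVec_C (u : Fin m → ℝ) (a : Fin m) :
    (pencilPoly A *ᵥ fun b => C (u b)) a = affinePoly fun i => (A i *ᵥ u) a := by
  have hcoeff : (fun i => (A i *ᵥ u) a) = ∑ b, u b • fun i => A i a b := by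
    ext i
    simp [mulVec, dotProduct, mul_comm]
  rw [hcoeff, map_sum]
  simp only [map_smul, smul_eq_C_mul, mulVec, dotProduct, pencilPoly_apply, mul_comm]

lemma vLv_eq_dotProduct (v : Fin m → MvPolynomial (Fin n) ℝ) :
    vLv A v = v ⬝ᵥ pencilPoly A *ᵥ v := by
  simp only [vLv, dotProduct, mulVec, Finset.mul_sum, mul_assoc]

lemma vLv_smul (r : MvPolynomial (Fin n) ℝ) (v : Fin m → MvPolynomial (Fin n) ℝ) :
    vLv A (r • v) = r ^ 2 * vLv A v := by
  simp only [vLv_eq_dotProduct, mulVec_smul, dotProduct_smul, smul_dotProduct, smul_eq_mul]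
  ring

lemma vLv_smul_add_single (hsymm : ∀ i, (A i).IsSymm) (r s : MvPolynomial (Fin n) ℝ)
    (v : Fin m → MvPolynomial (Fin n) ℝ) (a : Fin m) :
    vLv A (r • v + Pi.single a s) =
      r ^ 2 * vLv A v + 2 * r * s * (pencilPoly A *ᵥ v) a + s ^ 2 * pencilPoly A a a := by
  rw [vLv_eq_dotProduct, add_dotProduct_mulVec_add_of_isSymm (pencilPoly_isSymm hsymm),
    ← vLv_eq_dotProduct, vLv_smul, single_dotProduct, single_dotProduct, mulVec_smul,
    mulVec_single]
  simp only [smul_eq_mul, Pi.smul_apply, MulOpposite.smul_eq_mul_unop, MulOpposite.unop_op,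
    Matrix.col_apply]
  ring

/-- The coefficient vector of the affine linear polynomial `uᵀ L u`, for a real vector `u`. -/
def quadCoeff (A : Fin (n + 1) → Matrix (Fin m) (Fin m) ℝ) (u : Fin m → ℝ) : Fin (n + 1) → ℝ :=
  fun i => u ⬝ᵥ A i *ᵥ u

lemma vLv_C (u : Fin m → ℝ) : vLv A (fun b => C (u b)) = affinePoly (quadCoeff A u) := by
  have hcoeff : quadCoeff A u = ∑ a, u a • fun i => (A i *ᵥ u) a := by
    ext i
    simp [quadCoeff, dotProduct]
  rw [hcoeff, map_sum, vLv_eq_dotProduct]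
  simp only [map_smul, smul_eq_C_mul, dotProduct, pencilPoly_mulVec_C]

lemma continuous_quadCoeff : Continuous (quadCoeff A) := by
  unfold quadCoeff
  simp only [dotProduct, mulVec]
  fun_prop

lemma quadCoeff_smul (c : ℝ) (u : Fin m → ℝ) : quadCoeff A (c • u) = c ^ 2 • quadCoeff A u := by
  ext i
  simp only [quadCoeff, mulVec_smul, dotProduct_smul, smul_dotProduct, Pi.smul_apply, smul_eq_mul]
  ring

/-- The vectors `u` with `L u = 0`, that is, those annihilated by every coefficient matrix of the
pencil. -/
def pencilKer (A : Fin (n + 1) → Matrix (Fin m) (Fin m) ℝ) : Submodule ℝ (Fin m → ℝ) :=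
  ⨅ i, LinearMap.ker (A i).mulVecLin

lemma mem_pencilKer {u : Fin m → ℝ} : u ∈ pencilKer A ↔ ∀ i, A i *ᵥ u = 0 := by
  simp [pencilKer]

lemma quadCoeff_add_of_mem_pencilKer (hsymm : ∀ i, (A i).IsSymm) {u : Fin m → ℝ}
    (hu : u ∈ pencilKer A) (w : Fin m → ℝ) : quadCoeff A (u + w) = quadCoeff A w := by
  ext i
  simp [quadCoeff, add_dotProduct_mulVec_add_of_isSymm (hsymm i), mem_pencilKer.1 hu i]

lemma dotProduct_pencilEval (x : Fin n → ℝ) (u : Fin m → ℝ) :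
    u ⬝ᵥ pencilEval A x *ᵥ u = quadCoeff A u 0 + ∑ i, x i * quadCoeff A u i.succ := by
  simp only [quadCoeff, pencilEval, add_mulVec, dotProduct_add, sum_mulVec, dotProduct_sum,
    smul_mulVec, dotProduct_smul, smul_eq_mul]

lemma pencilEval_isHermitian (hsymm : ∀ i, (A i).IsSymm) (x : Fin n → ℝ) :
    (pencilEval A x).IsHermitian := by
  ext a b
  simp [pencilEval, Matrix.sum_apply, (hsymm _).apply]

lemma mem_specSet_iff (hsymm : ∀ i, (A i).IsSymm) (x : Fin n → ℝ) :
    x ∈ specSet A ↔ ∀ u : Fin m → ℝ, 0 ≤ quadCoeff A u 0 + ∑ i, x i * quadCoeff A u i.succ := by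
  rw [specSet, Set.mem_ofPred_eq, posSemidef_iff_dotProduct_mulVec,
    and_iff_right (pencilEval_isHermitian hsymm x)]
  simp only [star_trivial, dotProduct_pencilEval]

lemma specSet_nonempty_of_dual_pos (hsymm : ∀ i, (A i).IsSymm) (φ : (Fin (n + 1) → ℝ) →ₗ[ℝ] ℝ)
    (hone : 0 < φ (Pi.single 0 1)) (hquad : ∀ u, 0 ≤ φ (quadCoeff A u)) :
    (specSet A).Nonempty := by
  have hφ : ∀ z, φ z = ∑ i, z i * φ (Pi.single i 1) := fun z => by
    conv_lhs => rw [pi_eq_sum_univ' z]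
    simp only [map_sum, map_smul, smul_eq_mul]
  refine ⟨fun i => φ (Pi.single i.succ 1) / φ (Pi.single 0 1), (mem_specSet_iff hsymm _).2 ?_⟩
  intro u
  have hu := hquad u
  rw [hφ, Fin.sum_univ_succ] at hu
  refine (div_nonneg hu hone.le).trans_eq ?_
  rw [add_div, mul_div_cancel_right₀ _ hone.ne', Finset.sum_div]
  congr 1
  exact Finset.sum_congr rfl fun i _ => by ring

end Pencils

section TruncatedQuadraticModule

variable {n m : ℕ} {A : Fin (n + 1) → Matrix (Fin m) (Fin m) ℝ} {k l : ℕ}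
  {p q : MvPolynomial (Fin n) ℝ}

namespace memQMdeg

lemma zero : memQMdeg A k 0 :=
  ⟨0, 0, Fin.elim0, Fin.elim0, fun i => i.elim0, fun j => j.elim0, by simp⟩

lemma add (hp : memQMdeg A k p) (hq : memQMdeg A k q) : memQMdeg A k (p + q) := by
  obtain ⟨k₁, k₂, r, v, hr, hv, rfl⟩ := hp
  obtain ⟨l₁, l₂, s, w, hs, hw, rfl⟩ := hq
  refine ⟨k₁ + l₁, k₂ + l₂, Fin.append r s, Fin.append v w, ?_, ?_, ?_⟩
  · exact fun i => Fin.addCases (by simpa using hr) (by simpa using hs) i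
  · exact fun j => Fin.addCases (by simpa using hv) (by simpa using hw) j
  · simp only [Fin.sum_univ_add, Fin.append_left, Fin.append_right]
    ring

lemma sq_mul (hp : memQMdeg A k p) (hq : q.totalDegree ≤ l) :
    memQMdeg A (l + k) (q ^ 2 * p) := by
  obtain ⟨k₁, k₂, r, v, hr, hv, rfl⟩ := hp
  refine ⟨k₁, k₂, fun i => q * r i, fun j => q • v j, fun i => ?_, fun j a => ?_, ?_⟩
  · exact (totalDegree_mul _ _).trans (add_le_add hq (hr i))
  · exact (totalDegree_mul _ _).trans (add_le_add hq (hv j a))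
  · simp only [vLv_smul, mul_pow, mul_add, Finset.mul_sum]

lemma smul (hp : memQMdeg A k p) {c : ℝ} (hc : 0 ≤ c) : memQMdeg A k (c • p) := by
  have := hp.sq_mul (q := C √c) (l := 0) (by simp)
  rwa [← C_pow, Real.sq_sqrt hc, zero_add, ← smul_eq_C_mul] at this

end memQMdeg

/-- The truncated quadratic module `M_L^(k)`, as a convex cone in the polynomial ring. -/
def truncatedQM (A : Fin (n + 1) → Matrix (Fin m) (Fin m) ℝ) (k : ℕ) :
    PointedCone ℝ (MvPolynomial (Fin n) ℝ) where
  carrier := {p | memQMdeg A k p}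
  zero_mem' := memQMdeg.zero
  add_mem' := memQMdeg.add
  smul_mem' c _ hp := hp.smul c.2

lemma mem_truncatedQM : p ∈ truncatedQM A k ↔ memQMdeg A k p := Iff.rfl

lemma truncatedQM_mono (hkl : k ≤ l) : truncatedQM A k ≤ truncatedQM A l := by
  rintro _ ⟨k₁, k₂, r, v, hr, hv, rfl⟩
  exact ⟨k₁, k₂, r, v, fun i => (hr i).trans hkl, fun j a => (hv j a).trans hkl, rfl⟩

lemma sq_mem_truncatedQM (hp : p.totalDegree ≤ k) : p ^ 2 ∈ truncatedQM A k :=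
  ⟨1, 0, fun _ => p, Fin.elim0, fun _ => hp, fun j => j.elim0, by simp⟩

lemma vLv_mem_truncatedQM {v : Fin m → MvPolynomial (Fin n) ℝ} (hv : ∀ a, (v a).totalDegree ≤ k) :
    vLv A v ∈ truncatedQM A k :=
  ⟨0, 1, Fin.elim0, fun _ => v, fun i => i.elim0, fun _ => hv, by simp⟩

lemma sq_mul_mem_truncatedQM (hq : q.totalDegree ≤ l) (hp : p ∈ truncatedQM A k) :
    q ^ 2 * p ∈ truncatedQM A (l + k) :=
  memQMdeg.sq_mul hp hq

lemma affinePoly_quadCoeff_mem_truncatedQM (u : Fin m → ℝ) :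
    affinePoly (quadCoeff A u) ∈ truncatedQM A k := by
  rw [← vLv_C]
  exact vLv_mem_truncatedQM (by simp)

lemma neg_one_mem_truncatedQM_of_C_mem {c : ℝ} (hc : c < 0) (h : C c ∈ truncatedQM A k) :
    -1 ∈ truncatedQM A k := by
  have hscaled := (truncatedQM A k).smul_mem (r := -c⁻¹) (by simpa using hc.le) h
  rwa [smul_eq_C_mul, ← C_mul, neg_mul, inv_mul_cancel₀ hc.ne, C_neg, C_1] at hscaled

lemma neg_sq_mem_truncatedQM (hd : p.totalDegree ≤ l) (hp : p ∈ truncatedQM A k)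
    (hn : -p ∈ truncatedQM A k) : -p ^ 2 ∈ truncatedQM A (l + k) := by
  have hsub := sq_mul_mem_truncatedQM (q := 1 - p) (l := l)
    ((totalDegree_sub _ _).trans (max_le (by simp) hd)) hp
  have hadd := sq_mul_mem_truncatedQM (q := 1 + p) (l := l)
    ((totalDegree_add _ _).trans (max_le (by simp) hd)) hn
  have hid : -p ^ 2 = (1 / 4 : ℝ) • ((1 - p) ^ 2 * p + (1 + p) ^ 2 * -p) := by
    have hfour : (1 - p) ^ 2 * p + (1 + p) ^ 2 * -p = (4 : ℝ) • -p ^ 2 := by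
      rw [smul_eq_C_mul, map_ofNat]
      ring
    rw [hfour, smul_smul]
    norm_num
  rw [hid]
  exact PointedCone.smul_mem _ (by norm_num) (add_mem hsub hadd)

lemma neg_one_mem_truncatedQM_of_neg_one_add_mul_mem {r : MvPolynomial (Fin n) ℝ}
    (hp : p.totalDegree ≤ 1) (hr : r.totalDegree ≤ 2 * k)
    (hlift : -1 + p * r ∈ truncatedQM A k) (hsq : -p ^ 2 ∈ truncatedQM A 1) :
    -1 ∈ truncatedQM A (2 * k + 1) := by
  have hlift' : -1 + p * r ∈ truncatedQM A (2 * k + 1) := truncatedQM_mono (by omega) hlift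
  have hdeg : (1 - p * r).totalDegree ≤ 2 * k + 1 := by
    refine (totalDegree_sub _ _).trans (max_le (by simp) ?_)
    exact (totalDegree_mul p r).trans (by omega)
  have hid : (-1 : MvPolynomial (Fin n) ℝ) =
      (-1 + p * r) + (-1 + p * r) + (1 - p * r) ^ 2 + r ^ 2 * -p ^ 2 := by ring
  rw [hid]
  exact add_mem (add_mem (add_mem hlift' hlift') (sq_mem_truncatedQM hdeg))
    (sq_mul_mem_truncatedQM hr hsq)

-- For `v = r u + ℓ eₐ` with `ℓ = (L u)ₐ` one has `vᵀ L v = (2 r + Lₐₐ) ℓ²`; take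
-- `r = -(Lₐₐ + 1) / 2`.
lemma neg_sq_mulVec_mem_truncatedQM_of_quadCoeff_eq_zero (hsymm : ∀ i, (A i).IsSymm)
    {u : Fin m → ℝ} (hu : quadCoeff A u = 0) (a : Fin m) :
    -(affinePoly fun i => (A i *ᵥ u) a) ^ 2 ∈ truncatedQM A 1 := by
  set ℓ : MvPolynomial (Fin n) ℝ := affinePoly fun i => (A i *ᵥ u) a with hℓ
  set r : MvPolynomial (Fin n) ℝ := C (-1 / 2) * (pencilPoly A a a + 1) with hr
  set v : Fin m → MvPolynomial (Fin n) ℝ := (r • fun b => C (u b)) + Pi.single a ℓ with hv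
  have hrdeg : r.totalDegree ≤ 1 := by
    refine (totalDegree_mul _ _).trans ?_
    rw [totalDegree_C, zero_add]
    exact (totalDegree_add _ _).trans (max_le (totalDegree_pencilPoly_le a a) (by simp))
  have hvdeg : ∀ b, (v b).totalDegree ≤ 1 := fun b => by
    refine (totalDegree_add _ _).trans (max_le ?_ ?_)
    · exact (totalDegree_mul _ _).trans (by simpa using hrdeg)
    · rcases eq_or_ne b a with rfl | hb
      · simpa using totalDegree_affinePoly_le fun i => (A i *ᵥ u) b
      · simp [hb]
  have hval : -ℓ ^ 2 = vLv A v := by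
    have h2 : (2 : MvPolynomial (Fin n) ℝ) * C (-1 / 2) = -1 := by
      rw [← map_ofNat C 2, ← C_mul]
      norm_num
    rw [hv, vLv_smul_add_single hsymm, vLv_C, hu, map_zero, pencilPoly_mulVec_C, ← hℓ, hr]
    linear_combination (-(pencilPoly A a a + 1) * ℓ ^ 2) * h2
  exact hval ▸ vLv_mem_truncatedQM hvdeg

end TruncatedQuadraticModule

section InfeasiblePencils

variable {n m : ℕ} {A : Fin (n + 1) → Matrix (Fin m) (Fin m) ℝ} {W : Submodule ℝ (Fin m → ℝ)}

/-- The coefficient vectors of `1` and of the polynomials `uᵀ L u`, with `u` on the unit sphere of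
`W`. For `W` a complement of `pencilKer A` this is a compact set of generators of the cone spanned
by `1` and all the `uᵀ L u`. -/
def normalizedGenerators (A : Fin (n + 1) → Matrix (Fin m) (Fin m) ℝ)
    (W : Submodule ℝ (Fin m → ℝ)) : Set (Fin (n + 1) → ℝ) :=
  insert (Pi.single 0 1) (quadCoeff A '' (W ∩ Metric.sphere 0 1))

lemma isCompact_normalizedGenerators : IsCompact (normalizedGenerators A W) :=
  (((isCompact_sphere _ _).inter_left W.closed_of_finiteDimensional).image
    continuous_quadCoeff).insert _

lemma hull_normalizedGenerators_le :
    PointedCone.hull ℝ (normalizedGenerators A W) ≤ (truncatedQM A 0).comap affinePoly := by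
  refine Submodule.span_le.2 ?_
  rintro _ (rfl | ⟨u, -, rfl⟩)
  · have h := sq_mem_truncatedQM (A := A) (p := 1) (k := 0) (by simp)
    simpa [affinePoly_apply] using h
  · exact affinePoly_quadCoeff_mem_truncatedQM u

lemma specSet_nonempty_of_pos_normalizedGenerators (hsymm : ∀ i, (A i).IsSymm)
    (hW : Codisjoint (pencilKer A) W) (φ : (Fin (n + 1) → ℝ) →ₗ[ℝ] ℝ)
    (hφ : ∀ z ∈ normalizedGenerators A W, 0 < φ z) : (specSet A).Nonempty := by
  refine specSet_nonempty_of_dual_pos hsymm φ (hφ _ (Set.mem_insert _ _)) fun x => ?_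
  obtain ⟨u, hu, w, hw, rfl⟩ := Submodule.mem_sup.1 (hW.eq_top ▸ Submodule.mem_top (x := x))
  rw [quadCoeff_add_of_mem_pencilKer hsymm hu]
  rcases eq_or_ne w 0 with rfl | hw0
  · have hzero : quadCoeff A 0 = 0 := funext fun i => zero_dotProduct _
    rw [hzero, map_zero]
  · have hnorm : ‖w‖ ≠ 0 := norm_ne_zero_iff.2 hw0
    have hunit : ‖w‖⁻¹ • w ∈ (W : Set (Fin m → ℝ)) ∩ Metric.sphere 0 1 :=
      ⟨W.smul_mem _ hw, by simp [norm_smul, hnorm]⟩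
    have hpos := hφ _ (Set.mem_insert_of_mem _ ⟨_, hunit, rfl⟩)
    rw [← smul_inv_smul₀ hnorm w, quadCoeff_smul, map_smul]
    exact mul_nonneg (sq_nonneg _) hpos.le

lemma exists_neg_affinePoly_sq_mem_of_isotropic (hsymm : ∀ i, (A i).IsSymm) {u : Fin m → ℝ}
    (hu : quadCoeff A u = 0) (hker : u ∉ pencilKer A) :
    ∃ z : Fin (n + 1) → ℝ, z ≠ 0 ∧ -(affinePoly z) ^ 2 ∈ truncatedQM A 1 := by
  rw [mem_pencilKer, not_forall] at hker
  obtain ⟨i, hi⟩ := hker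
  obtain ⟨a, ha⟩ := Function.ne_iff.1 hi
  exact ⟨fun i => (A i *ᵥ u) a, fun h => ha (congrFun h i),
    neg_sq_mulVec_mem_truncatedQM_of_quadCoeff_eq_zero hsymm hu a⟩

lemma exists_neg_affinePoly_sq_mem_truncatedQM_one (hsymm : ∀ i, (A i).IsSymm)
    (hinf : specSet A = ∅) :
    ∃ z : Fin (n + 1) → ℝ, z ≠ 0 ∧ -(affinePoly z) ^ 2 ∈ truncatedQM A 1 := by
  obtain ⟨W, hW⟩ := (pencilKer A).exists_isCompl
  rcases exists_neg_mem_hull_or_exists_dual_pos (isCompact_normalizedGenerators (A := A) (W := W))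
    with ⟨z, hz, hneg⟩ | ⟨φ, hφ⟩
  · rcases eq_or_ne z 0 with rfl | hz0
    · rcases hz with hone | ⟨u, ⟨huW, hu1⟩, hu⟩
      · simpa using congrFun hone 0
      · exact exists_neg_affinePoly_sq_mem_of_isotropic hsymm hu fun hker =>
          ne_zero_of_mem_unit_sphere ⟨u, hu1⟩ (Submodule.disjoint_def.1 hW.disjoint u hker huW)
    · refine ⟨z, hz0, neg_sq_mem_truncatedQM (totalDegree_affinePoly_le z)
        (hull_normalizedGenerators_le (PointedCone.subset_hull hz)) ?_⟩
      simpa using hull_normalizedGenerators_le hneg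
  · exact absurd hinf
      (specSet_nonempty_of_pos_normalizedGenerators hsymm hW.codisjoint φ.toLinearMap hφ).ne_empty

end InfeasiblePencils

section Elimination

variable {n m : ℕ}

/-- The restriction of a pencil to the hyperplane `affinePoly z = 0`, as a pencil in the variables
other than `X j`. It is meaningful for `z j.succ ≠ 0`. -/
noncomputable def restrictPencil (A : Fin (n + 2) → Matrix (Fin m) (Fin m) ℝ)
    (z : Fin (n + 2) → ℝ) (j : Fin (n + 1)) (i : Fin (n + 1)) : Matrix (Fin m) (Fin m) ℝ :=
  A (j.succ.succAbove i) - (z (j.succ.succAbove i) / z j.succ) • A j.succ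

variable {A : Fin (n + 2) → Matrix (Fin m) (Fin m) ℝ} {z : Fin (n + 2) → ℝ} {j : Fin (n + 1)}

lemma restrictPencil_isSymm (hsymm : ∀ i, (A i).IsSymm) (i : Fin (n + 1)) :
    (restrictPencil A z j i).IsSymm :=
  (hsymm _).sub ((hsymm _).smul _)

lemma pencilEval_restrictPencil (y : Fin n → ℝ) :
    pencilEval (restrictPencil A z j) y = pencilEval A (j.insertNth
      (-(z 0 / z j.succ + ∑ i, y i * (z (j.succAbove i).succ / z j.succ))) y) := by
  simp only [pencilEval, restrictPencil, Fin.sum_univ_succAbove _ j, Fin.insertNth_apply_same,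
    Fin.insertNth_apply_succAbove, Fin.succ_succAbove_zero, Fin.succ_succAbove_succ, smul_sub,
    Finset.sum_sub_distrib, neg_smul, add_smul, Finset.sum_smul, smul_smul]
  abel

lemma specSet_restrictPencil_eq_empty (hinf : specSet A = ∅) :
    specSet (restrictPencil A z j) = ∅ := by
  rw [Set.eq_empty_iff_forall_notMem] at hinf ⊢
  intro y hy
  rw [specSet, Set.mem_ofPred_eq, pencilEval_restrictPencil] at hy
  exact hinf _ hy

lemma map_rename_pencilPoly_restrictPencil (hz : z j.succ ≠ 0) :
    (pencilPoly (restrictPencil A z j)).map (rename j.succAbove) =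
      pencilPoly A - affinePoly z • ((z j.succ)⁻¹ • A j.succ).map C := by
  ext1 a b
  set y : Fin (n + 2) → ℝ := (fun i => A i a b) - ((z j.succ)⁻¹ * A j.succ a b) • z with hy
  have hyj : y j.succ = 0 := by
    simp only [hy, Pi.sub_apply, Pi.smul_apply, smul_eq_mul]
    field_simp
    ring
  have hcoeff : (fun i => restrictPencil A z j i a b) = y ∘ j.succ.succAbove := by
    ext i
    simp only [restrictPencil, hy, Function.comp_apply, Pi.sub_apply, Pi.smul_apply,
      Matrix.sub_apply, Matrix.smul_apply, smul_eq_mul]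
    ring
  rw [map_apply, pencilPoly_apply, hcoeff, rename_affinePoly_comp_succAbove hyj, hy, map_sub,
    map_smul, smul_eq_C_mul, mul_comm]
  rfl

lemma rename_vLv_restrictPencil (hz : z j.succ ≠ 0) (v : Fin m → MvPolynomial (Fin n) ℝ) :
    rename j.succAbove (vLv (restrictPencil A z j) v) =
      vLv A (rename j.succAbove ∘ v) - affinePoly z * ((rename j.succAbove ∘ v) ⬝ᵥ
        ((z j.succ)⁻¹ • A j.succ).map C *ᵥ (rename j.succAbove ∘ v)) := by
  have hmap : rename j.succAbove (vLv (restrictPencil A z j) v) = (rename j.succAbove ∘ v) ⬝ᵥ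
      (pencilPoly (restrictPencil A z j)).map (rename j.succAbove) *ᵥ
        (rename j.succAbove ∘ v) := by
    simp only [vLv_eq_dotProduct, dotProduct, mulVec, map_sum, map_mul, map_apply,
      Function.comp_apply]
  rw [hmap, map_rename_pencilPoly_restrictPencil hz, sub_mulVec, smul_mulVec, dotProduct_sub,
    dotProduct_smul, ← vLv_eq_dotProduct, smul_eq_mul]

lemma totalDegree_dotProduct_map_C_mulVec_le {σ ι R : Type*} [Fintype ι] [CommSemiring R]
    (B : Matrix ι ι R) {v : ι → MvPolynomial σ R} {k : ℕ} (hv : ∀ a, (v a).totalDegree ≤ k) :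
    (v ⬝ᵥ B.map C *ᵥ v).totalDegree ≤ 2 * k := by
  refine totalDegree_finsetSum_le fun a _ => (totalDegree_mul _ _).trans ?_
  rw [two_mul]
  refine add_le_add (hv a) (totalDegree_finsetSum_le fun b _ => (totalDegree_mul _ _).trans ?_)
  simpa using hv b

lemma exists_rename_add_mem_truncatedQM (hz : z j.succ ≠ 0) {k : ℕ} {p : MvPolynomial (Fin n) ℝ}
    (hp : p ∈ truncatedQM (restrictPencil A z j) k) :
    ∃ r : MvPolynomial (Fin (n + 1)) ℝ, r.totalDegree ≤ 2 * k ∧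
      rename j.succAbove p + affinePoly z * r ∈ truncatedQM A k := by
  obtain ⟨k₁, k₂, q, v, hq, hv, rfl⟩ := hp
  have hv' : ∀ i a, ((rename j.succAbove ∘ v i) a).totalDegree ≤ k := fun i a =>
    (totalDegree_rename_le _ _).trans (hv i a)
  refine ⟨∑ i, (rename j.succAbove ∘ v i) ⬝ᵥ
      ((z j.succ)⁻¹ • A j.succ).map C *ᵥ (rename j.succAbove ∘ v i),
    totalDegree_finsetSum_le fun i _ => totalDegree_dotProduct_map_C_mulVec_le _ (hv' i),
    k₁, k₂, fun i => rename j.succAbove (q i), fun i => rename j.succAbove ∘ v i,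
    fun i => (totalDegree_rename_le _ _).trans (hq i), hv', ?_⟩
  simp only [map_add, map_sum, map_pow, rename_vLv_restrictPencil hz, Finset.sum_sub_distrib,
    Finset.mul_sum]
  ring

end Elimination

section Induction

variable {n m : ℕ}

lemma neg_one_mem_truncatedQM_of_isEmpty_vars {A : Fin 1 → Matrix (Fin m) (Fin m) ℝ}
    (hsymm : ∀ i, (A i).IsSymm) (hinf : specSet A = ∅) (k : ℕ) : -1 ∈ truncatedQM A k := by
  have hx : (0 : Fin 0 → ℝ) ∉ specSet A := hinf ▸ Set.notMem_empty _
  rw [mem_specSet_iff hsymm, not_forall] at hx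
  obtain ⟨u, hu⟩ := hx
  rw [Finset.univ_eq_empty, Finset.sum_empty, add_zero, not_le] at hu
  refine neg_one_mem_truncatedQM_of_C_mem hu ?_
  rw [← affinePoly_eq_C fun i => i.elim0]
  exact affinePoly_quadCoeff_mem_truncatedQM u

lemma neg_one_mem_truncatedQM_succ_vars {A : Fin (n + 2) → Matrix (Fin m) (Fin m) ℝ} {k : ℕ}
    (ih : ∀ B : Fin (n + 1) → Matrix (Fin m) (Fin m) ℝ,
      (∀ i, (B i).IsSymm) → specSet B = ∅ → -1 ∈ truncatedQM B k)
    (hsymm : ∀ i, (A i).IsSymm) (hinf : specSet A = ∅) :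
    -1 ∈ truncatedQM A (2 * k + 1) := by
  obtain ⟨z, hz, hsq⟩ := exists_neg_affinePoly_sq_mem_truncatedQM_one hsymm hinf
  by_cases hconst : ∀ j : Fin (n + 1), z j.succ = 0
  · have hz0 : z 0 ≠ 0 := fun h0 => hz (funext (Fin.cases h0 hconst))
    rw [affinePoly_eq_C hconst, ← C_pow, ← C_neg] at hsq
    exact truncatedQM_mono (by omega)
      (neg_one_mem_truncatedQM_of_C_mem (neg_neg_of_pos (sq_pos_of_ne_zero hz0)) hsq)
  · obtain ⟨j, hj⟩ := not_forall.1 hconst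
    obtain ⟨r, hr, hlift⟩ := exists_rename_add_mem_truncatedQM hj
      (ih (restrictPencil A z j) (restrictPencil_isSymm hsymm)
        (specSet_restrictPencil_eq_empty hinf))
    rw [map_neg, map_one] at hlift
    exact neg_one_mem_truncatedQM_of_neg_one_add_mul_mem (totalDegree_affinePoly_le z) hr hlift hsq

end Induction

/-- **Theorem (exponential degree bound in the number of variables).** If `L` is an
infeasible linear pencil in `n` variables, then `-1 ∈ M_L^(2ⁿ - 1)`. -/
theorem neg_one_mem_truncatedQM_two_pow_vars
    (n m : ℕ) (A : Fin (n+1) → Matrix (Fin m) (Fin m) ℝ)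
    (hsymm : ∀ i, (A i).IsSymm)
    (hinf : specSet A = ∅) :
    memQMdeg A (2^n - 1) (-1) := by
  rw [← mem_truncatedQM]
  induction n with
  | zero => exact neg_one_mem_truncatedQM_of_isEmpty_vars hsymm hinf _
  | succ n ih =>
    have hdeg : 2 ^ (n + 1) - 1 = 2 * (2 ^ n - 1) + 1 := by
      have := Nat.one_le_two_pow (n := n)
      omega
    rw [hdeg]
    exact neg_one_mem_truncatedQM_succ_vars ih hsymm hinf
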